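/- There exist real matrices W1 ∈ ℝ^{8×6}, b1 ∈ ℝ^{8}, W2 ∈ ℝ^{2×4}, b2 ∈ ℝ^{2} (i.e., a deductron with 6 inputs, 4 memory cells and 2 outputs) that correctly decodes the W-language: for every valid W-image c_0,…,c_{N−1} and every t with 1 ≤ t ≤ N−1, the deductron's output o_t on the sliding-window input sequence equals (1,0) if the image emits 'X' at position t, (0,1) if it emits 'O' at position t, and (0,0) otherwise. -/

import Mathlib

/-!
Whether a start event occurs at position `t` is a linear threshold condition on the window
`(c (t-1), c t)`, because the columns are `0` or unit vectors: an X-start is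
`1 - c t 2 + c (t-1) 1 + c (t-1) 2 ≤ 0` and an O-start is
`1 - c t 0 + c (t-1) 0 + c (t-1) 1 ≤ 0` (coordinates numbered from `0`).

Hence a memory cell with `u` detecting X-starts and `v` detecting O-starts stores the bit "the
most recent start is an X-start", and exchanging `u` and `v` gives the same for O-starts. Two
more cells copy the bits `c t 0` and `c t 2`, that is, whether the current column is `e1` or
`e3`. The outputs are the conjunctions of the first and third, and of the second and fourth,
bits. Only the fact that every column is a label is used, not the edges of the chain
(`window_thresholds`, `memory_spec`).
-/

/-- The hard threshold activation: `S a = 1` if `a ≤ 0`, `S a = 0` if `a > 0`. -/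
noncomputable def hardS (a : ℝ) : ℝ := if a ≤ 0 then 1 else 0

/-- States of the W-chain: `z` is the blank state `0`, and `e2p`, `e2m` are `e2⁺`, `e2⁻`. -/
inductive WState | z | e1 | e2p | e2m | e3
deriving DecidableEq

/-- The edge relation of the W-chain. -/
def wEdge : WState → WState → Prop := fun a b =>
  a = b ∨
  (a = .z ∧ b = .e1) ∨ (a = .z ∧ b = .e3) ∨
  (a = .e1 ∧ b = .z) ∨ (a = .e1 ∧ b = .e3) ∨ (a = .e1 ∧ b = .e2p) ∨
  (a = .e2p ∧ b = .e3) ∨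
  (a = .e3 ∧ b = .z) ∨ (a = .e3 ∧ b = .e1) ∨ (a = .e3 ∧ b = .e2m) ∨
  (a = .e2m ∧ b = .e1)

/-- The column labelling each state of the W-chain. -/
def wLabel : WState → (Fin 3 → ℝ)
  | .z => ![0, 0, 0]
  | .e1 => ![1, 0, 0]
  | .e2p => ![0, 1, 0]
  | .e2m => ![0, 1, 0]
  | .e3 => ![0, 0, 1]

def col0 : Fin 3 → ℝ := ![0, 0, 0]
def colE1 : Fin 3 → ℝ := ![1, 0, 0]
def colE3 : Fin 3 → ℝ := ![0, 0, 1]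

/-- `c 0, …, c (N-1)` is a valid W-image: the label sequence of a path in the W-chain
starting and ending in `{0, e1, e3}`. -/
def ValidWImage (N : ℕ) (c : ℕ → Fin 3 → ℝ) : Prop :=
  1 ≤ N ∧ ∃ s : ℕ → WState,
    (∀ t, t + 1 < N → wEdge (s t) (s (t + 1))) ∧
    (∀ t, t < N → c t = wLabel (s t)) ∧
    (s 0 = .z ∨ s 0 = .e1 ∨ s 0 = .e3) ∧
    (s (N - 1) = .z ∨ s (N - 1) = .e1 ∨ s (N - 1) = .e3)

/-- An X-start occurs at position `t ≥ 1`. -/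
def XStart (c : ℕ → Fin 3 → ℝ) (t : ℕ) : Prop :=
  1 ≤ t ∧ c t = colE3 ∧ (c (t - 1) = col0 ∨ c (t - 1) = colE1)

/-- An O-start occurs at position `t ≥ 1`. -/
def OStart (c : ℕ → Fin 3 → ℝ) (t : ℕ) : Prop :=
  1 ≤ t ∧ c t = colE1 ∧ (c (t - 1) = col0 ∨ c (t - 1) = colE3)

/-- The image emits 'X' at position `t`: `c t = e1` and the most recent start event at a
position `s ≤ t` is an X-start. -/
def EmitsX (c : ℕ → Fin 3 → ℝ) (t : ℕ) : Prop :=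
  1 ≤ t ∧ c t = colE1 ∧ ∃ s, s ≤ t ∧ XStart c s ∧
    ∀ r, s < r → r ≤ t → ¬ XStart c r ∧ ¬ OStart c r

/-- The image emits 'O' at position `t`: `c t = e3` and the most recent start event at a
position `s ≤ t` is an O-start. -/
def EmitsO (c : ℕ → Fin 3 → ℝ) (t : ℕ) : Prop :=
  1 ≤ t ∧ c t = colE3 ∧ ∃ s, s ≤ t ∧ OStart c s ∧
    ∀ r, s < r → r ≤ t → ¬ XStart c r ∧ ¬ OStart c r

/-- `u`-part of the hidden layer: first `m` coordinates of `S (W1 xₜ + b1)`. -/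
noncomputable def dedU (m nin : ℕ) (W1 : Matrix (Fin (2 * m)) (Fin nin) ℝ)
    (b1 : Fin (2 * m) → ℝ) (x : ℕ → Fin nin → ℝ) (t : ℕ) (i : Fin m) : ℝ :=
  hardS ((∑ j, W1 ⟨i.val, by have := i.isLt; omega⟩ j * x t j) +
    b1 ⟨i.val, by have := i.isLt; omega⟩)

/-- `v`-part of the hidden layer: last `m` coordinates of `S (W1 xₜ + b1)`. -/
noncomputable def dedV (m nin : ℕ) (W1 : Matrix (Fin (2 * m)) (Fin nin) ℝ)
    (b1 : Fin (2 * m) → ℝ) (x : ℕ → Fin nin → ℝ) (t : ℕ) (i : Fin m) : ℝ :=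
  hardS ((∑ j, W1 ⟨m + i.val, by have := i.isLt; omega⟩ j * x t j) +
    b1 ⟨m + i.val, by have := i.isLt; omega⟩)

/-- The memory of the deductron: `z 0 = 0`, `z t = (1 − uₜ)(1 − vₜ) z (t−1) + uₜ`. -/
noncomputable def dedZ (m nin : ℕ) (W1 : Matrix (Fin (2 * m)) (Fin nin) ℝ)
    (b1 : Fin (2 * m) → ℝ) (x : ℕ → Fin nin → ℝ) : ℕ → Fin m → ℝ
  | 0 => fun _ => 0
  | t + 1 => fun i =>
      (1 - dedU m nin W1 b1 x (t + 1) i) * (1 - dedV m nin W1 b1 x (t + 1) i) *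
        dedZ m nin W1 b1 x t i + dedU m nin W1 b1 x (t + 1) i

/-- The output of the deductron: `oₜ = S (W2 zₜ + b2)`. -/
noncomputable def dedO (m nin nout : ℕ) (W1 : Matrix (Fin (2 * m)) (Fin nin) ℝ)
    (b1 : Fin (2 * m) → ℝ) (W2 : Matrix (Fin nout) (Fin m) ℝ) (b2 : Fin nout → ℝ)
    (x : ℕ → Fin nin → ℝ) (t : ℕ) (i : Fin nout) : ℝ :=
  hardS ((∑ j, W2 i j * dedZ m nin W1 b1 x t j) + b2 i)

/-- The sliding-window input sequence of an image: `xₜ = (c (t−1), c t) ∈ {0,1}⁶`. -/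
def slide (c : ℕ → Fin 3 → ℝ) (t : ℕ) (j : Fin 6) : ℝ :=
  if h : (j : ℕ) < 3 then c (t - 1) ⟨j, h⟩
  else c t ⟨(j : ℕ) - 3, by have := j.isLt; omega⟩

/-- A deductron with `m` memory cells, 6 inputs and 2 outputs correctly decodes
the W-language. -/
def DecodesW (m : ℕ) (W1 : Matrix (Fin (2 * m)) (Fin 6) ℝ) (b1 : Fin (2 * m) → ℝ)
    (W2 : Matrix (Fin 2) (Fin m) ℝ) (b2 : Fin 2 → ℝ) : Prop :=
  ∀ N : ℕ, ∀ c : ℕ → Fin 3 → ℝ, ValidWImage N c →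
    ∀ t, 1 ≤ t → t ≤ N - 1 →
      (EmitsX c t → (fun i => dedO m 6 2 W1 b1 W2 b2 (slide c) t i) = ![1, 0]) ∧
      (EmitsO c t → (fun i => dedO m 6 2 W1 b1 W2 b2 (slide c) t i) = ![0, 1]) ∧
      (¬ EmitsX c t → ¬ EmitsO c t →
        (fun i => dedO m 6 2 W1 b1 W2 b2 (slide c) t i) = ![0, 0])

/-- The most recent event of kind `P` or `Q` at a position `≤ t` exists and is of kind `P`. -/
def LastIs (P Q : ℕ → Prop) (t : ℕ) : Prop :=
  ∃ s, s ≤ t ∧ P s ∧ ∀ r, s < r → r ≤ t → ¬ P r ∧ ¬ Q r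

lemma lastIs_zero {P Q : ℕ → Prop} (h : ¬ P 0) : ¬ LastIs P Q 0 := by
  rintro ⟨s, hs, hP, -⟩
  obtain rfl : s = 0 := by omega
  exact h hP

lemma lastIs_succ {P Q : ℕ → Prop} (t : ℕ) :
    LastIs P Q (t + 1) ↔ P (t + 1) ∨ (¬ Q (t + 1) ∧ LastIs P Q t) := by
  constructor
  · rintro ⟨s, hs, hP, hr⟩
    rcases Nat.lt_or_ge s (t + 1) with h | h
    · exact Or.inr ⟨(hr (t + 1) h le_rfl).2, s, by omega, hP, fun r h1 h2 => hr r h1 (by omega)⟩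
    · obtain rfl : s = t + 1 := by omega
      exact Or.inl hP
  · intro h
    by_cases hP : P (t + 1)
    · exact ⟨t + 1, le_rfl, hP, fun r h1 h2 => by omega⟩
    · obtain ⟨hQ, s, hs, hPs, hr⟩ := h.resolve_left hP
      refine ⟨s, by omega, hPs, fun r h1 h2 => ?_⟩
      rcases Nat.lt_or_ge r (t + 1) with h | h
      · exact hr r h1 (by omega)
      · obtain rfl : r = t + 1 := by omega
        exact ⟨hP, hQ⟩

lemma emitsX_iff (c : ℕ → Fin 3 → ℝ) (t : ℕ) (ht : 1 ≤ t) :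
    EmitsX c t ↔ c t = colE1 ∧ LastIs (XStart c) (OStart c) t := by
  simp [EmitsX, LastIs, ht]

lemma emitsO_iff (c : ℕ → Fin 3 → ℝ) (t : ℕ) (ht : 1 ≤ t) :
    EmitsO c t ↔ c t = colE3 ∧ LastIs (OStart c) (XStart c) t := by
  simp [EmitsO, LastIs, ht, and_comm]

/-- Hidden-layer weights. Rows `0`–`3` are the `u`-parts and rows `4`–`7` the `v`-parts of the
cells "last start is X", "last start is O", "current column is `e1`", "current column is `e3`". -/
def decW1 : Matrix (Fin (2 * 4)) (Fin 6) ℝ :=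
  ![![0, 1, 1, 0, 0, -1],
    ![1, 1, 0, -1, 0, 0],
    ![0, 0, 0, -1, 0, 0],
    ![0, 0, 0, 0, 0, -1],
    ![1, 1, 0, -1, 0, 0],
    ![0, 1, 1, 0, 0, -1],
    ![0, 0, 0, 1, 0, 0],
    ![0, 0, 0, 0, 0, 1]]

/-- Hidden-layer biases matching `decW1`. -/
def decB1 : Fin (2 * 4) → ℝ := ![1, 1, 1, 1, 1, 1, 0, 0]

/-- Output weights: `2 - a - b ≤ 0` is the conjunction of two bits `a` and `b`. -/
def decW2 : Matrix (Fin 2) (Fin 4) ℝ := ![![-1, 0, -1, 0], ![0, -1, 0, -1]]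

/-- Output biases matching `decW2`. -/
def decB2 : Fin 2 → ℝ := ![2, 2]

/-- For windows of labels, the linear thresholds in `decW1`, `decB1` detect the start events and
the current column. -/
lemma window_thresholds (c : ℕ → Fin 3 → ℝ) (t : ℕ) (a b : WState)
    (ha : c t = wLabel a) (hb : c (t + 1) = wLabel b) :
    (c t 1 + c t 2 - c (t + 1) 2 + 1 ≤ 0 ↔ XStart c (t + 1)) ∧
    (c t 0 + c t 1 - c (t + 1) 0 + 1 ≤ 0 ↔ OStart c (t + 1)) ∧
    (-c (t + 1) 0 + 1 ≤ 0 ↔ c (t + 1) = colE1) ∧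
    (-c (t + 1) 2 + 1 ≤ 0 ↔ c (t + 1) = colE3) ∧
    (c (t + 1) 0 ≤ 0 ↔ c (t + 1) ≠ colE1) ∧
    (c (t + 1) 2 ≤ 0 ↔ c (t + 1) ≠ colE3) := by
  simp only [XStart, OStart, Nat.add_sub_cancel, ha, hb, ne_eq]
  cases a <;> cases b <;>
    simp [wLabel, col0, colE1, colE3, funext_iff, Fin.forall_fin_succ]

open Classical in
/-- The memory update, with the hidden layer replaced by the events it detects. -/
lemma memory_step (c : ℕ → Fin 3 → ℝ) (t : ℕ) (a b : WState)
    (ha : c t = wLabel a) (hb : c (t + 1) = wLabel b) :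
    dedZ 4 6 decW1 decB1 (slide c) (t + 1) =
      ![if XStart c (t + 1) then 1 else if OStart c (t + 1) then 0
          else dedZ 4 6 decW1 decB1 (slide c) t 0,
        if OStart c (t + 1) then 1 else if XStart c (t + 1) then 0
          else dedZ 4 6 decW1 decB1 (slide c) t 1,
        if c (t + 1) = colE1 then 1 else 0,
        if c (t + 1) = colE3 then 1 else 0] := by
  obtain ⟨hX, hO, h1, h3, h1', h3'⟩ := window_thresholds c t a b ha hb
  have e0 : ∀ i : Fin 4, dedZ 4 6 decW1 decB1 (slide c) (t + 1) i =
      (1 - dedU 4 6 decW1 decB1 (slide c) (t + 1) i) *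
        (1 - dedV 4 6 decW1 decB1 (slide c) (t + 1) i) *
        dedZ 4 6 decW1 decB1 (slide c) t i + dedU 4 6 decW1 decB1 (slide c) (t + 1) i :=
    fun i => rfl
  have hs : slide c (t + 1) =
      ![c t 0, c t 1, c t 2, c (t + 1) 0, c (t + 1) 1, c (t + 1) 2] := by
    funext j; fin_cases j <;> rfl
  have U0 : dedU 4 6 decW1 decB1 (slide c) (t + 1) 0 = if XStart c (t + 1) then 1 else 0 := by
    simp only [← hX, dedU, hardS, hs]
    congr 2
    simp [Fin.sum_univ_succ, decW1, decB1]; ring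
  have U1 : dedU 4 6 decW1 decB1 (slide c) (t + 1) 1 = if OStart c (t + 1) then 1 else 0 := by
    simp only [← hO, dedU, hardS, hs]
    congr 2
    simp [Fin.sum_univ_succ, decW1, decB1]; ring
  have U2 : dedU 4 6 decW1 decB1 (slide c) (t + 1) 2 = if c (t + 1) = colE1 then 1 else 0 := by
    simp only [← h1, dedU, hardS, hs]
    congr 2
    simp [Fin.sum_univ_succ, decW1, decB1]
  have U3 : dedU 4 6 decW1 decB1 (slide c) (t + 1) 3 = if c (t + 1) = colE3 then 1 else 0 := by
    simp only [← h3, dedU, hardS, hs]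
    congr 2
    simp [Fin.sum_univ_succ, decW1, decB1]
  have V0 : dedV 4 6 decW1 decB1 (slide c) (t + 1) 0 = if OStart c (t + 1) then 1 else 0 := by
    simp only [← hO, dedV, hardS, hs]
    congr 2
    simp [Fin.sum_univ_succ, decW1, decB1]; ring
  have V1 : dedV 4 6 decW1 decB1 (slide c) (t + 1) 1 = if XStart c (t + 1) then 1 else 0 := by
    simp only [← hX, dedV, hardS, hs]
    congr 2
    simp [Fin.sum_univ_succ, decW1, decB1]; ring
  have V2 : dedV 4 6 decW1 decB1 (slide c) (t + 1) 2 = if c (t + 1) ≠ colE1 then 1 else 0 := by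
    simp only [← h1', dedV, hardS, hs]
    congr 2
    simp [Fin.sum_univ_succ, decW1, decB1]
  have V3 : dedV 4 6 decW1 decB1 (slide c) (t + 1) 3 = if c (t + 1) ≠ colE3 then 1 else 0 := by
    simp only [← h3', dedV, hardS, hs]
    congr 2
    simp [Fin.sum_univ_succ, decW1, decB1]
  funext i
  rw [e0]
  fin_cases i
  · simp only [Fin.zero_eta, U0, V0]; split_ifs <;> simp [*]
  · simp only [Fin.mk_one, U1, V1]; split_ifs <;> simp [*]
  · simp only [Fin.reduceFinMk, U2, V2]; split_ifs <;> simp_all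
  · simp only [Fin.reduceFinMk, U3, V3]; split_ifs <;> simp_all

open Classical in
/-- The first two cells store the kind of the most recent start event. -/
lemma memory_spec (N : ℕ) (c : ℕ → Fin 3 → ℝ) (s : ℕ → WState)
    (hc : ∀ t, t < N → c t = wLabel (s t)) (t : ℕ) (ht : t < N) :
    dedZ 4 6 decW1 decB1 (slide c) t 0 =
      (if LastIs (XStart c) (OStart c) t then 1 else 0) ∧
    dedZ 4 6 decW1 decB1 (slide c) t 1 =
      (if LastIs (OStart c) (XStart c) t then 1 else 0) := by
  induction t with
  | zero =>
    have hX : ¬ LastIs (XStart c) (OStart c) 0 := lastIs_zero (by simp [XStart])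
    have hO : ¬ LastIs (OStart c) (XStart c) 0 := lastIs_zero (by simp [OStart])
    simp [dedZ, hX, hO]
  | succ t ih =>
    obtain ⟨i0, i1⟩ := ih (by omega)
    rw [memory_step c t _ _ (hc t (by omega)) (hc (t + 1) ht)]
    simp only [Matrix.cons_val_zero, Matrix.cons_val_one, i0, i1, lastIs_succ]
    constructor <;> split_ifs <;> simp_all

/-- **On deductron decoding of the W-language.** There exists a deductron with 6 inputs,
4 memory cells and 2 outputs which correctly decodes every valid expression of the
W-language. -/
theorem deductron_four_cells_decodes_W :
    ∃ (W1 : Matrix (Fin (2 * 4)) (Fin 6) ℝ) (b1 : Fin (2 * 4) → ℝ)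
      (W2 : Matrix (Fin 2) (Fin 4) ℝ) (b2 : Fin 2 → ℝ),
      DecodesW 4 W1 b1 W2 b2 := by
  classical
  refine ⟨decW1, decB1, decW2, decB2, ?_⟩
  rintro N c ⟨-, s, -, hc, -, -⟩ t ht htN
  rw [emitsX_iff c t ht, emitsO_iff c t ht]
  obtain ⟨k, rfl⟩ : ∃ k, t = k + 1 := ⟨t - 1, by omega⟩
  obtain ⟨z0, z1⟩ := memory_spec N c s hc (k + 1) (by omega)
  have step := memory_step c k _ _ (hc k (by omega)) (hc (k + 1) (by omega))
  have z2 := congrFun step 2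
  have z3 := congrFun step 3
  simp only [Matrix.cons_val] at z2 z3
  have hne : colE1 ≠ colE3 := fun h => by simpa [colE1, colE3] using congrFun h 0
  -- Each output is the conjunction of the two memory bits it reads.
  have hout : (fun i => dedO 4 6 2 decW1 decB1 decW2 decB2 (slide c) (k + 1) i) =
      ![if c (k + 1) = colE1 ∧ LastIs (XStart c) (OStart c) (k + 1) then 1 else 0,
        if c (k + 1) = colE3 ∧ LastIs (OStart c) (XStart c) (k + 1) then 1 else 0] := by
    funext i
    fin_cases i
    · simp only [dedO, hardS, Fin.sum_univ_four, z0, z1, z2, z3]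
      by_cases p : c (k + 1) = colE1 <;> by_cases q : LastIs (XStart c) (OStart c) (k + 1) <;>
        simp [decW2, decB2, p, q] <;> norm_num
    · simp only [dedO, hardS, Fin.sum_univ_four, z0, z1, z2, z3]
      by_cases p : c (k + 1) = colE3 <;> by_cases q : LastIs (OStart c) (XStart c) (k + 1) <;>
        simp [decW2, decB2, p, q] <;> norm_num
  rw [hout]
  refine ⟨fun h => ?_, fun h => ?_, fun h h' => ?_⟩
  · simp [h, hne]
  · simp [h, hne.symm]
  · simp only [if_neg h, if_neg h']
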